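/- Let R be a commutative ring, let L and M be R-modules, and let F be a finite decreasing filtration on M. If the associated graded module gr_F^p M is a flat R-module for every p ∈ ℤ, then the canonical surjections L ⊗_R F^p M → F^p(L ⊗_R M) and L ⊗_R gr_F^p M → gr_F^p(L ⊗_R M) are isomorphisms for every p ∈ ℤ. -/

import Mathlib

/-!
Statement 0: Let `R` be a commutative ring, `L, M` be `R`-modules and `F` a finite
decreasing filtration on `M`.  If `gr_F^p M` is flat for every `p`, then the canonical
surjections `L ⊗ F^p M → F^p(L ⊗ M)` and `L ⊗ gr_F^p M → gr_F^p(L ⊗ M)` are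
isomorphisms for every `p`.

Here `F^p(L ⊗ M) = image(L ⊗ F^p M → L ⊗ M)`.  The canonical surjection on graded
pieces is characterized as the unique map `c` with `c ∘ (L ⊗ (F^p M → gr_F^p M)) = `
(the composite `L ⊗ F^p M → F^p(L ⊗ M) → gr_F^p(L ⊗ M))`, the left factor being
surjective.
-/

/-!
The argument rests on one fact: for a short exact sequence `0 → A → B → C → 0` with `C` flat,
`L ⊗ A → L ⊗ B` is injective for every `L` (that is, `Tor₁(L, C) = 0`). Applied to
`0 → F^{p+1} M → F^p M → gr^p M → 0`, it makes every `L ⊗ F^{p+1} M → L ⊗ F^p M` injective.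
Composing these maps up to an index where `F^p M = M` shows that `L ⊗ F^p M → L ⊗ M` is injective
(`lTensor_subtype_injective`), which is the first isomorphism. Hence an element of `L ⊗ F^p M`
whose image lies in `F^{p+1}(L ⊗ M)` already comes from `L ⊗ F^{p+1} M`; by right exactness of the
tensor product this identifies `gr^p(L ⊗ M)` with `L ⊗ gr^p M`.
-/

set_option autoImplicit false

open TensorProduct

variable {R : Type*} [CommRing R]

/-- `F^{p+1} M` viewed inside `F^p M`. -/
abbrev grSub {M : Type*} [AddCommGroup M] [Module R M] (F : ℤ → Submodule R M) (p : ℤ) :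
    Submodule R (F p) :=
  Submodule.comap (F p).subtype (F (p + 1))

/-- The graded piece `gr_F^p M = F^p M / F^{p+1} M`. -/
abbrev Gr {M : Type*} [AddCommGroup M] [Module R M] (F : ℤ → Submodule R M) (p : ℤ) :=
  F p ⧸ grSub F p

/-- The induced filtration on `L ⊗ M`: `F^p(L ⊗ M) = image(L ⊗ F^p M → L ⊗ M)`. -/
noncomputable def tFil (L : Type*) [AddCommGroup L] [Module R L] {M : Type*}
    [AddCommGroup M] [Module R M] (F : ℤ → Submodule R M) (p : ℤ) :
    Submodule R (L ⊗[R] M) :=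
  LinearMap.range (TensorProduct.map (LinearMap.id : L →ₗ[R] L) (F p).subtype)

/-- The canonical surjection `L ⊗ F^p M → F^p(L ⊗ M)`. -/
noncomputable def toTFil (L : Type*) [AddCommGroup L] [Module R L] {M : Type*}
    [AddCommGroup M] [Module R M] (F : ℤ → Submodule R M) (p : ℤ) :
    (L ⊗[R] (F p)) →ₗ[R] tFil L F p :=
  LinearMap.codRestrict (tFil L F p)
    (TensorProduct.map (LinearMap.id : L →ₗ[R] L) (F p).subtype)
    (fun x => LinearMap.mem_range_self _ x)

/-- The composite `L ⊗ F^p M → F^p(L ⊗ M) → gr_F^p(L ⊗ M)`. -/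
noncomputable def grTensorProj (L : Type*) [AddCommGroup L] [Module R L] {M : Type*}
    [AddCommGroup M] [Module R M] (F : ℤ → Submodule R M) (p : ℤ) :
    (L ⊗[R] (F p)) →ₗ[R] Gr (tFil L F) p :=
  (grSub (tFil L F) p).mkQ ∘ₗ toTFil L F p

lemma exact_inclusion_mkQ {M : Type*} [AddCommGroup M] [Module R M] {F : ℤ → Submodule R M}
    {p : ℤ} (h : F (p + 1) ≤ F p) :
    Function.Exact (Submodule.inclusion h) (grSub F p).mkQ := by
  rw [LinearMap.exact_iff, Submodule.ker_mkQ, Submodule.range_inclusion]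

lemma subtype_comp_inclusion_lTensor (L : Type*) [AddCommGroup L] [Module R L] {M : Type*}
    [AddCommGroup M] [Module R M] {A B : Submodule R M} (h : A ≤ B) (x : L ⊗[R] A) :
    B.subtype.lTensor L ((Submodule.inclusion h).lTensor L x) = A.subtype.lTensor L x := by
  rw [← LinearMap.comp_apply, ← LinearMap.lTensor_comp, Submodule.subtype_comp_inclusion]

/-- Descending along the filtration from an index where `F^p M = M`, flatness of the graded pieces
keeps `L ⊗ F^p M → L ⊗ M` injective. -/
lemma lTensor_subtype_injective (L : Type*) [AddCommGroup L] [Module R L] {M : Type*}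
    [AddCommGroup M] [Module R M] (F : ℤ → Submodule R M) (hanti : Antitone F)
    (hexh : ∃ a : ℤ, ∀ p ≤ a, F p = ⊤) (hflat : ∀ p : ℤ, Module.Flat R (Gr F p)) (p : ℤ) :
    Function.Injective ((F p).subtype.lTensor L) := by
  obtain ⟨a, ha⟩ := hexh
  have htop : ∀ q ≤ a, Function.Injective ((F q).subtype.lTensor L) := by
    intro q hq
    exact (LinearEquiv.lTensor L (LinearEquiv.ofTop (F q) (ha q hq))).injective
  rcases le_total p a with h | h
  · exact htop p h
  induction p, h using Int.leInduction with
  | base => exact htop a le_rfl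
  | succ q _ ih =>
    have hle : F (q + 1) ≤ F q := hanti (by omega)
    have := hflat q
    have hinj : Function.Injective ((Submodule.inclusion hle).lTensor L) :=
      LinearMap.lTensor_injective_of_exact_of_flat _ (Submodule.mkQ_surjective _) _
        (Submodule.inclusion_injective hle) (exact_inclusion_mkQ hle) L
    intro x y hxy
    apply hinj
    apply ih
    simpa only [subtype_comp_inclusion_lTensor] using hxy

lemma toTFil_surjective (L : Type*) [AddCommGroup L] [Module R L] {M : Type*}
    [AddCommGroup M] [Module R M] (F : ℤ → Submodule R M) (p : ℤ) :
    Function.Surjective (toTFil L F p) := by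
  rintro ⟨_, x, rfl⟩
  exact ⟨x, rfl⟩

lemma grTensorProj_eq_zero_iff (L : Type*) [AddCommGroup L] [Module R L] {M : Type*}
    [AddCommGroup M] [Module R M] (F : ℤ → Submodule R M) (p : ℤ) (x : L ⊗[R] F p) :
    grTensorProj L F p x = 0 ↔
      ∃ z, (F (p + 1)).subtype.lTensor L z = (F p).subtype.lTensor L x :=
  Submodule.Quotient.mk_eq_zero _

theorem statement_0 {L M : Type*} [AddCommGroup L] [Module R L] [AddCommGroup M]
    [Module R M] (F : ℤ → Submodule R M)
    (hanti : Antitone F)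
    (hexh : ∃ a : ℤ, ∀ p ≤ a, F p = ⊤)
    (hbdd : ∃ b : ℤ, ∀ p, b ≤ p → F p = ⊥)
    (hflat : ∀ p : ℤ, Module.Flat R (Gr F p)) (p : ℤ) :
    Function.Bijective (toTFil L F p) ∧
    (∃ c : (L ⊗[R] Gr F p) →ₗ[R] Gr (tFil L F) p,
      c ∘ₗ LinearMap.lTensor L (grSub F p).mkQ = grTensorProj L F p) ∧
    (∀ c : (L ⊗[R] Gr F p) →ₗ[R] Gr (tFil L F) p,
      c ∘ₗ LinearMap.lTensor L (grSub F p).mkQ = grTensorProj L F p →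
      Function.Bijective c) := by
  have hle : F (p + 1) ≤ F p := hanti (by omega)
  have hinj := lTensor_subtype_injective L F hanti hexh hflat p
  have hex := exact_inclusion_mkQ hle
  have hsurj := Submodule.mkQ_surjective (grSub F p)
  refine ⟨⟨fun x y hxy => hinj (congrArg Subtype.val hxy), toTFil_surjective L F p⟩, ?_, ?_⟩
  · -- Right exactness presents `L ⊗ gr^p M` as the cokernel of `L ⊗ F^{p+1} M → L ⊗ F^p M`.
    let e := lTensor.equiv L hex hsurj
    have hker : LinearMap.range ((Submodule.inclusion hle).lTensor L) ≤
        LinearMap.ker (grTensorProj L F p) := by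
      rintro _ ⟨z, rfl⟩
      rw [LinearMap.mem_ker, grTensorProj_eq_zero_iff]
      exact ⟨z, (subtype_comp_inclusion_lTensor L hle z).symm⟩
    refine ⟨(Submodule.liftQ _ (grTensorProj L F p) hker) ∘ₗ e.symm.toLinearMap, ?_⟩
    refine LinearMap.ext fun x => ?_
    have hx : e.symm ((grSub F p).mkQ.lTensor L x) = Submodule.Quotient.mk x := by
      rw [LinearEquiv.symm_apply_eq]
      rfl
    simp only [LinearMap.comp_apply, LinearEquiv.coe_coe, hx]
    rfl
  · intro c hc
    have hc' : ∀ x, c ((grSub F p).mkQ.lTensor L x) = grTensorProj L F p x :=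
      fun x => LinearMap.congr_fun hc x
    constructor
    · rw [injective_iff_map_eq_zero]
      intro y hy
      obtain ⟨x, rfl⟩ := LinearMap.lTensor_surjective L hsurj y
      rw [hc', grTensorProj_eq_zero_iff] at hy
      obtain ⟨z, hz⟩ := hy
      rw [← subtype_comp_inclusion_lTensor L hle] at hz
      exact (lTensor_exact L hex hsurj x).2 ⟨z, hinj hz⟩
    · intro y
      obtain ⟨x, hx⟩ := ((Submodule.mkQ_surjective _).comp (toTFil_surjective L F p)) y
      exact ⟨(grSub F p).mkQ.lTensor L x, (hc' x).trans hx⟩
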